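/- Let D = (V, E; c; s, t) be a flow network in which every arc belongs to at least one s-t path. If the flow game Γ_D is convex, then the set 𝒫 of all s-t paths constitutes an arc cover of D, i.e., ⋃_{P ∈ 𝒫} P = E, and the paths in 𝒫 are pairwise disjoint with respect to the bottleneck set B, i.e., no two distinct s-t paths share an arc of B. Moreover, every s-t path contains a bottleneck arc b ∈ B such that it is the unique s-t path through b. -/

import Mathlib

open scoped Classical
open Finset

noncomputable section

/-- The arcs (consecutive vertex pairs) of a vertex list. -/
def arcsOf {V : Type*} [DecidableEq V] (vs : List V) : Finset (V × V) :=
  (vs.zip vs.tail).toFinset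

/-- `vs` is the vertex list of a directed path from `a` to `b` using arcs of `E`,
with pairwise distinct vertices. -/
def IsPathList {V : Type*} (E : Finset (V × V)) (a b : V) (vs : List V) : Prop :=
  vs.Nodup ∧ vs.head? = some a ∧ vs.getLast? = some b ∧
    vs.Chain' (fun x y => (x, y) ∈ E)

/-- `P` is (the arc set of) an `s`-`t` path in the network with arc set `E`. -/
def IsSTPath {V : Type*} [DecidableEq V] (E : Finset (V × V)) (s t : V)
    (P : Finset (V × V)) : Prop :=
  ∃ vs : List V, IsPathList E s t vs ∧ P = arcsOf vs

/-- The capacity of a path (arc set): the minimum capacity of its arcs. -/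
def pathCap {V : Type*} (c : V × V → ℝ) (P : Finset (V × V)) : ℝ :=
  sInf (c '' (P : Set (V × V)))

/-- `e` is a bottleneck arc of some `s`-`t` path, i.e. `e ∈ B`. -/
def IsBottleneck {V : Type*} [DecidableEq V] (E : Finset (V × V)) (c : V × V → ℝ)
    (s t : V) (e : V × V) : Prop :=
  ∃ P : Finset (V × V), IsSTPath E s t P ∧ e ∈ P ∧ c e = pathCap c P

/-- The finite set `𝒫` of all `s`-`t` paths (as arc sets). -/
def stPaths {V : Type*} [DecidableEq V] (E : Finset (V × V)) (s t : V) :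
    Finset (Finset (V × V)) :=
  E.powerset.filter (fun P => IsSTPath E s t P)

/-- The value of a flow `f`: net flow out of the source `s`. -/
def flowValue {V : Type*} [DecidableEq V] (E : Finset (V × V)) (s : V)
    (f : V × V → ℝ) : ℝ :=
  ∑ e ∈ E.filter (fun e => e.1 = s), f e - ∑ e ∈ E.filter (fun e => e.2 = s), f e

/-- `f` is a feasible flow on the coalition `S`. -/
def IsFeasibleFlow {V : Type*} [DecidableEq V] (E : Finset (V × V)) (c : V × V → ℝ)
    (s t : V) (S : Finset (V × V)) (f : V × V → ℝ) : Prop :=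
  (∀ e ∈ E, 0 ≤ f e ∧ f e ≤ c e) ∧
  (∀ e, e ∉ S → f e = 0) ∧
  (∀ v, v ≠ s → v ≠ t →
    ∑ e ∈ E.filter (fun e => e.2 = v), f e = ∑ e ∈ E.filter (fun e => e.1 = v), f e)

/-- `γ` is the characteristic function of the flow game on `D = (V,E;c;s,t)`:
for each coalition `S ⊆ E`, `γ S` is the maximum value of a feasible flow on `S`. -/
def IsFlowGame {V : Type*} [DecidableEq V] (E : Finset (V × V)) (c : V × V → ℝ)
    (s t : V) (γ : Finset (V × V) → ℝ) : Prop :=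
  ∀ S : Finset (V × V), S ⊆ E →
    IsGreatest {x : ℝ | ∃ f, IsFeasibleFlow E c s t S f ∧ flowValue E s f = x} (γ S)

/-- The cooperative game `γ` with player set `E` is convex (supermodular). -/
def GameConvex {V : Type*} [DecidableEq V] (E : Finset (V × V))
    (γ : Finset (V × V) → ℝ) : Prop :=
  ∀ e ∈ E, ∀ S T : Finset (V × V), S ⊆ T → T ⊆ E.erase e →
    γ (insert e S) - γ S ≤ γ (insert e T) - γ T

/-- The directed graph with arc set `E` contains a directed cycle. -/
def HasDirectedCycle {V : Type*} (E : Finset (V × V)) : Prop :=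
  ∃ (v : V) (vs : List V), (v :: vs).Nodup ∧
    (v :: vs).Chain' (fun x y => (x, y) ∈ E) ∧
    ((v :: vs).getLast (List.cons_ne_nil v vs), v) ∈ E

section aux
variable {V : Type*} [DecidableEq V]

lemma arcsOf_cons_cons (a b : V) (l : List V) :
    arcsOf (a :: b :: l) = insert (a, b) (arcsOf (b :: l)) := by
  simp [arcsOf]

lemma arcsOf_single (a : V) : arcsOf [a] = ∅ := by simp [arcsOf]

lemma mem_of_mem_arcsOf {l : List V} {e : V × V} (h : e ∈ arcsOf l) : e.1 ∈ l ∧ e.2 ∈ l := by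
  simp only [arcsOf, List.mem_toFinset] at h
  obtain ⟨x, y⟩ := e
  have := List.of_mem_zip h
  exact ⟨this.1, List.mem_of_mem_tail this.2⟩

lemma arcsOf_tail_inj : ∀ {l : List V}, l.Nodup → ∀ {e e' : V × V}, e ∈ arcsOf l → e' ∈ arcsOf l →
    e.1 = e'.1 → e = e'
  | [], _, e, e', h, _, _ => by simp [arcsOf] at h
  | [a], _, e, e', h, _, _ => by simp [arcsOf] at h
  | a :: b :: l, hn, e, e', h, h', hh => by
    rw [List.nodup_cons] at hn
    rw [arcsOf_cons_cons, Finset.mem_insert] at h h'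
    rcases h with rfl | h <;> rcases h' with rfl | h'
    · rfl
    · exact absurd (by rw [show a = e'.1 from hh]; exact (mem_of_mem_arcsOf h').1) hn.1
    · exact absurd (by rw [show a = e.1 from hh.symm]; exact (mem_of_mem_arcsOf h).1) hn.1
    · exact arcsOf_tail_inj hn.2 h h' hh

lemma chain_iff_arcs (X : Finset (V × V)) : ∀ l : List V,
    l.Chain' (fun x y => (x, y) ∈ X) ↔ arcsOf l ⊆ X
  | [] => by simp [arcsOf]; exact List.isChain_nil
  | [a] => by simp [arcsOf]; exact List.isChain_singleton _
  | a :: b :: l => by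
    have := chain_iff_arcs X (b :: l)
    rw [arcsOf_cons_cons, Finset.insert_subset_iff, ← this]
    exact List.isChain_cons_cons

lemma path_unique (X : Finset (V × V)) (t : V)
    (hX : ∀ e ∈ X, ∀ e' ∈ X, e.1 = e'.1 → e = e') : ∀ (l l' : List V) (a : V),
    l.Nodup → l'.Nodup → l.head? = some a → l'.head? = some a → l.getLast? = some t →
    l'.getLast? = some t → arcsOf l ⊆ X → arcsOf l' ⊆ X → l = l'
  | [], _, a, _, _, h, _, _, _, _, _ => by simp at h
  | _, [], a, _, _, _, h, _, _, _, _ => by simp at h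
  | [x], [y], a, _, _, h, h', _, _, _, _ => by simp at h h'; rw [h, h']
  | [x], y :: z :: l, a, _, hn, h, h', g, g', _, _ => by
    simp at h h' g
    rw [List.getLast?_cons_cons] at g'
    have := List.mem_of_getLast? g'
    rw [List.nodup_cons] at hn
    subst h; subst g; subst h'
    exact absurd this hn.1
  | y :: z :: l, [x], a, hn, _, h', h, g', g, _, _ => by
    simp at h h' g
    rw [List.getLast?_cons_cons] at g'
    have := List.mem_of_getLast? g'
    rw [List.nodup_cons] at hn
    subst h; subst g; subst h'
    exact absurd this hn.1
  | x :: y :: l, x' :: y' :: l', a, hn, hn', h, h', g, g', k, k' => by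
    simp only [List.head?_cons, Option.some.injEq] at h h'
    rw [List.getLast?_cons_cons] at g g'
    rw [List.nodup_cons] at hn hn'
    rw [arcsOf_cons_cons, Finset.insert_subset_iff] at k k'
    subst h; subst h'
    have := hX _ k.1 _ k'.1 rfl
    obtain rfl : y = y' := by simpa using this
    rw [path_unique X t hX (y :: l) (y :: l') y hn.2 hn'.2 rfl rfl g g' k.2 k'.2]

def dv (E : Finset (V × V)) (f : V × V → ℝ) (v : V) : ℝ :=
  ∑ e ∈ E.filter (fun e => e.1 = v), f e - ∑ e ∈ E.filter (fun e => e.2 = v), f e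

lemma dv_eq (E : Finset (V × V)) (f : V × V → ℝ) (v : V) :
    dv E f v = ∑ e ∈ E, f e * ((if e.1 = v then 1 else 0) - (if e.2 = v then 1 else 0)) := by
  simp only [dv, Finset.sum_filter, mul_sub, Finset.sum_sub_distrib, mul_ite, mul_one, mul_zero]

def ind (P : Finset (V × V)) (e : V × V) : ℝ := if e ∈ P then 1 else 0

lemma dv_ind (E : Finset (V × V)) (v b : V) : ∀ (l : List V) (a : V), l.Nodup →
    l.head? = some a → l.getLast? = some b → arcsOf l ⊆ E →
    dv E (ind (arcsOf l)) v = (if a = v then 1 else 0) - (if b = v then 1 else 0)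
  | [], a, _, h, _, _ => by simp at h
  | [x], a, _, h, h', _ => by
    simp at h h'; subst h; subst h'; simp [dv_eq, arcsOf_single, ind]
  | x :: y :: l, a, hn, h, g, k => by
    simp only [List.head?_cons, Option.some.injEq] at h
    subst h
    rw [List.getLast?_cons_cons] at g
    rw [List.nodup_cons] at hn
    rw [arcsOf_cons_cons, Finset.insert_subset_iff] at k
    have ih := dv_ind E v b (y :: l) y hn.2 rfl g k.2
    have hnot : (x, y) ∉ arcsOf (y :: l) := fun h => hn.1 (mem_of_mem_arcsOf h).1
    have : ∀ e, ind (arcsOf (x :: y :: l)) e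
        = (if e = (x, y) then 1 else 0) + ind (arcsOf (y :: l)) e := by
      intro e
      rw [arcsOf_cons_cons]
      unfold ind
      by_cases he : e = (x, y)
      · subst he; simp [hnot]
      · simp [he]
    rw [dv_eq] at ih ⊢
    simp only [this, add_mul, Finset.sum_add_distrib, ih, ite_mul, one_mul, zero_mul,
      Finset.sum_ite_eq', k.1, if_true]
    ring

lemma isSTPath_iff {E : Finset (V × V)} {s t : V} {P : Finset (V × V)} :
    IsSTPath E s t P ↔ ∃ l : List V, l.Nodup ∧ l.head? = some s ∧ l.getLast? = some t ∧
      arcsOf l ⊆ E ∧ P = arcsOf l := by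
  unfold IsSTPath IsPathList
  simp only [chain_iff_arcs, and_assoc]

lemma IsSTPath.subset {E : Finset (V × V)} {s t : V} {P : Finset (V × V)}
    (h : IsSTPath E s t P) : P ⊆ E := by
  obtain ⟨l, _, _, _, h', rfl⟩ := isSTPath_iff.1 h
  exact h'

lemma IsSTPath.nonempty {E : Finset (V × V)} {s t : V} {P : Finset (V × V)} (hst : s ≠ t)
    (h : IsSTPath E s t P) : P.Nonempty := by
  obtain ⟨l, _, h1, h2, h, rfl⟩ := isSTPath_iff.1 h
  match l with
  | [] => simp at h1
  | [a] => simp at h1 h2; exact absurd (h1.symm.trans h2) hst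
  | a :: b :: l => rw [arcsOf_cons_cons]; exact Finset.insert_nonempty _ _

lemma mem_stPaths {E : Finset (V × V)} {s t : V} {P : Finset (V × V)} :
    P ∈ stPaths E s t ↔ IsSTPath E s t P := by
  simp only [stPaths, Finset.mem_filter, Finset.mem_powerset, and_iff_right_iff_imp]
  exact IsSTPath.subset

lemma pathCap_spec (c : V × V → ℝ) {P : Finset (V × V)} (hP : P.Nonempty) :
    (∃ e ∈ P, c e = pathCap c P) ∧ ∀ e ∈ P, pathCap c P ≤ c e := by
  have hfin : (c '' (P : Set (V × V))).Finite := P.finite_toSet.image c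
  have hne : (c '' (P : Set (V × V))).Nonempty := (Finset.coe_nonempty.2 hP).image c
  refine ⟨?_, fun e he => csInf_le hfin.bddBelow ⟨e, he, rfl⟩⟩
  obtain ⟨e, he, h⟩ := hne.csInf_mem hfin
  exact ⟨e, he, h⟩

lemma exists_path_of_reach {X : Finset (V × V)} {s t : V}
    (h : Relation.ReflTransGen (fun x y => (x, y) ∈ X) s t) : ∃ P, IsSTPath X s t P := by
  induction h using Relation.ReflTransGen.head_induction_on with
  | refl => exact ⟨_, isSTPath_iff.2 ⟨[t], by simp, by simp, by simp, by simp [arcsOf], rfl⟩⟩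
  | head hab _ ih =>
    rename_i a b _
    obtain ⟨P, hP⟩ := ih
    obtain ⟨l, ⟨hn, h1, h2, h3⟩, -⟩ := hP
    by_cases ha : a ∈ l
    · obtain ⟨l1, l2, rfl⟩ := List.append_of_mem ha
      refine ⟨_, a :: l2, ⟨?_, rfl, ?_, ?_⟩, rfl⟩
      · exact (List.nodup_append.1 hn).2.1
      · simpa [List.getLast?_append] using h2
      · exact (List.isChain_append.1 h3).2.1
    · match l with
      | [] => simp at h1
      | x :: l =>
        simp only [List.head?_cons, Option.some.injEq] at h1
        subst h1
        refine ⟨_, a :: x :: l, ⟨List.nodup_cons.2 ⟨ha, hn⟩, rfl, ?_, ?_⟩, rfl⟩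
        · rw [List.getLast?_cons_cons]; exact h2
        · exact List.isChain_cons_cons.2 ⟨hab, h3⟩

lemma exists_support_path [Fintype V] {E : Finset (V × V)} {s t : V} {f : V × V → ℝ}
    (h0 : ∀ e ∈ E, 0 ≤ f e) (hcons : ∀ v, v ≠ s → v ≠ t → dv E f v = 0)
    (hpos : 0 < dv E f s) : ∃ P, IsSTPath E s t P ∧ ∀ e ∈ P, 0 < f e := by
  set X := E.filter (fun e => 0 < f e) with hX
  suffices h : Relation.ReflTransGen (fun x y => (x, y) ∈ X) s t by
    obtain ⟨P, hP⟩ := exists_path_of_reach h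
    obtain ⟨l, h1, h2, h3, h4, rfl⟩ := isSTPath_iff.1 hP
    exact ⟨_, isSTPath_iff.2 ⟨l, h1, h2, h3, h4.trans (Finset.filter_subset _ _), rfl⟩,
      fun e he => (Finset.mem_filter.1 (h4 he)).2⟩
  by_contra hr
  set A : Finset V := Finset.univ.filter
    (fun v => Relation.ReflTransGen (fun x y => (x, y) ∈ X) s v) with hA
  have hsA : s ∈ A := by simp [hA, Relation.ReflTransGen.refl]
  have htA : t ∉ A := by simpa [hA] using hr
  have e1 : ∑ v ∈ A, dv E f v = dv E f s := by
    refine Finset.sum_eq_single s (fun v hv hvs => hcons v hvs ?_) (fun h => absurd hsA h)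
    rintro rfl; exact htA hv
  have e2 : ∑ v ∈ A, dv E f v
      = ∑ e ∈ E, f e * ((if e.1 ∈ A then 1 else 0) - (if e.2 ∈ A then 1 else 0)) := by
    simp only [dv_eq]
    rw [Finset.sum_comm]
    refine Finset.sum_congr rfl fun e _ => ?_
    rw [← Finset.mul_sum, Finset.sum_sub_distrib]
    simp
  have e3 : ∑ e ∈ E, f e * ((if e.1 ∈ A then 1 else 0) - (if e.2 ∈ A then (1 : ℝ) else 0)) ≤ 0 := by
    refine Finset.sum_nonpos fun e he => ?_
    have hf := h0 e he
    rcases hf.eq_or_lt with hf' | hf'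
    · simp [← hf']
    · by_cases h1 : e.1 ∈ A
      · have h2 : e.2 ∈ A := by
          simp only [hA, Finset.mem_filter, Finset.mem_univ, true_and] at h1 ⊢
          exact h1.tail (by simp [hX, he, hf'])
        simp [h1, h2]
      · by_cases h2 : e.2 ∈ A <;> simp [h1, h2, hf]
  linarith

lemma dv_sub_smul (E : Finset (V × V)) (f g : V × V → ℝ) (r : ℝ) (v : V) :
    dv E (fun e => f e - r * g e) v = dv E f v - r * dv E g v := by
  simp only [dv_eq, Finset.mul_sum, ← Finset.sum_sub_distrib]
  exact Finset.sum_congr rfl fun e _ => by ring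

lemma IsSTPath.dv {E : Finset (V × V)} {s t : V} {P : Finset (V × V)}
    (h : IsSTPath E s t P) (v : V) :
    dv E (ind P) v = (if s = v then 1 else 0) - (if t = v then 1 else 0) := by
  obtain ⟨l, h1, h2, h3, h4, rfl⟩ := isSTPath_iff.1 h
  exact dv_ind E v t l s h1 h2 h3 h4

lemma decomp [Fintype V] {E : Finset (V × V)} {s t : V} (hst : s ≠ t) (n : ℕ) :
    ∀ f : V × V → ℝ, (E.filter (fun e => f e ≠ 0)).card = n → (∀ e ∈ E, 0 ≤ f e) →
    (∀ v, v ≠ s → v ≠ t → dv E f v = 0) →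
    ∃ L : Finset (V × V) → ℝ, (∀ P, 0 ≤ L P) ∧
      (∀ e ∈ E, ∑ P ∈ stPaths E s t, L P * ind P e ≤ f e) ∧
      dv E f s ≤ ∑ P ∈ stPaths E s t, L P := by
  induction n using Nat.strong_induction_on with
  | _ n ih =>
  intro f hn h0 hcons
  rcases le_or_gt (dv E f s) 0 with hv | hv
  · exact ⟨fun _ => 0, fun _ => le_rfl, by simpa using h0, by simpa using hv⟩
  obtain ⟨P, hP, hpos⟩ := exists_support_path h0 hcons hv
  obtain ⟨⟨e0, he0, hm⟩, hle⟩ := pathCap_spec f (hP.nonempty hst)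
  set r := pathCap f P with hr
  have hrpos : 0 < r := hm ▸ hpos e0 he0
  obtain ⟨L, hL0, hL1, hL2⟩ := ih
    (E.filter (fun e => f e - r * ind P e ≠ 0)).card (by
      rw [← hn]
      apply Finset.card_lt_card
      rw [Finset.ssubset_iff_of_subset]
      · refine ⟨e0, ?_, ?_⟩
        · simp [hP.subset he0, (hpos e0 he0).ne']
        · simp [ind, he0, hm]
      · intro e he
        simp only [Finset.mem_filter] at he ⊢
        refine ⟨he.1, fun hf => he.2 ?_⟩
        have : e ∉ P := fun h => (hpos e h).ne' hf
        simp [ind, this, hf])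
    (fun e => f e - r * ind P e) rfl
    (fun e he => by
      by_cases h : e ∈ P
      · simpa [ind, h] using hle e h
      · simpa [ind, h] using h0 e he)
    (fun v hs ht => by
      rw [dv_sub_smul, hcons v hs ht, hP.dv]; simp [hs.symm, ht.symm])
  refine ⟨fun Q => L Q + (if Q = P then r else 0), fun Q => ?_, fun e he => ?_, ?_⟩
  · have := hL0 Q
    beta_reduce
    split_ifs <;> linarith
  · have := hL1 e he
    simp only [add_mul, Finset.sum_add_distrib, ite_mul, zero_mul, Finset.sum_ite_eq',
      mem_stPaths.2 hP, if_true]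
    linarith
  · rw [dv_sub_smul, hP.dv] at hL2
    simp only [if_true, hst.symm, if_false] at hL2
    simp only [Finset.sum_add_distrib, Finset.sum_ite_eq', mem_stPaths.2 hP, if_true]
    linarith

def wt (E : Finset (V × V)) (c : V × V → ℝ) (s t : V) (X : Finset (V × V)) : ℝ :=
  ∑ P ∈ stPaths E s t, if P ⊆ X then pathCap c P else 0

lemma pathCap_pos {E : Finset (V × V)} {c : V × V → ℝ} {s t : V} (hst : s ≠ t)
    (hc : ∀ e ∈ E, 0 < c e) {P : Finset (V × V)} (hP : IsSTPath E s t P) : 0 < pathCap c P := by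
  obtain ⟨⟨e, he, h⟩, -⟩ := pathCap_spec c (hP.nonempty hst)
  rw [← h]; exact hc e (hP.subset he)

/-- flows decompose below the path capacities -/
lemma game_decomp [Fintype V] {E : Finset (V × V)} {c : V × V → ℝ} {s t : V}
    {γ : Finset (V × V) → ℝ} (hst : s ≠ t)
    (hγ : IsFlowGame E c s t γ) {X : Finset (V × V)} (hX : X ⊆ E) :
    ∃ L : Finset (V × V) → ℝ, (∀ P, 0 ≤ L P) ∧
      (∀ P ∈ stPaths E s t, L P ≤ if P ⊆ X then pathCap c P else 0) ∧
      (∀ e ∈ E, ∑ P ∈ stPaths E s t, L P * ind P e ≤ c e) ∧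
      γ X ≤ ∑ P ∈ stPaths E s t, L P := by
  obtain ⟨f, ⟨hf1, hf2, hf3⟩, hf4⟩ := (hγ X hX).1
  obtain ⟨L, h0, h1, h2⟩ := decomp hst _ f rfl (fun e he => (hf1 e he).1)
    (fun v hs ht => by rw [dv, hf3 v hs ht, sub_self])
  have key : ∀ P ∈ stPaths E s t, ∀ e ∈ P, L P ≤ f e := by
    intro P hP e he
    refine le_trans ?_ (h1 e ((mem_stPaths.1 hP).subset he))
    refine le_trans (by simp [ind, he]) (Finset.single_le_sum
      (f := fun P => L P * ind P e) (fun Q _ => ?_) hP)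
    unfold ind
    split_ifs <;> simp [h0]
  refine ⟨L, h0, fun P hP => ?_, fun e he => (h1 e he).trans (hf1 e he).2, ?_⟩
  · have hP' := mem_stPaths.1 hP
    split_ifs with h
    · obtain ⟨⟨e, he, h⟩, -⟩ := pathCap_spec c (hP'.nonempty hst)
      rw [← h]
      exact (key P hP e he).trans (hf1 e (hP'.subset he)).2
    · obtain ⟨e, he, heX⟩ := Finset.not_subset.1 h
      rw [← hf2 e heX]
      exact key P hP e he
  · rw [← hf4]; exact h2

lemma game_le_wt [Fintype V] {E : Finset (V × V)} {c : V × V → ℝ} {s t : V}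
    {γ : Finset (V × V) → ℝ} (hst : s ≠ t)
    (hγ : IsFlowGame E c s t γ) {X : Finset (V × V)} (hX : X ⊆ E) : γ X ≤ wt E c s t X := by
  obtain ⟨L, -, h1, -, h2⟩ := game_decomp hst hγ hX
  exact h2.trans (Finset.sum_le_sum h1)

lemma game_nonneg {E : Finset (V × V)} {c : V × V → ℝ} {s t : V}
    {γ : Finset (V × V) → ℝ} (hc : ∀ e ∈ E, 0 < c e)
    (hγ : IsFlowGame E c s t γ) {X : Finset (V × V)} (hX : X ⊆ E) : 0 ≤ γ X :=
  (hγ X hX).2 ⟨fun _ => 0, ⟨fun e he => ⟨le_rfl, (hc e he).le⟩, fun _ _ => rfl,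
    fun v _ _ => by simp⟩, by simp [flowValue]⟩

lemma cap_le_game {E : Finset (V × V)} {c : V × V → ℝ} {s t : V}
    {γ : Finset (V × V) → ℝ} (hst : s ≠ t) (hc : ∀ e ∈ E, 0 < c e)
    (hγ : IsFlowGame E c s t γ) {X P : Finset (V × V)} (hX : X ⊆ E) (hP : IsSTPath E s t P)
    (hPX : P ⊆ X) : pathCap c P ≤ γ X := by
  have hlin : ∀ v, dv E (fun e => 0 - (-pathCap c P) * ind P e) v
      = 0 - (-pathCap c P) * dv E (ind P) v := fun v => by
    rw [dv_sub_smul E (fun _ => 0)]; simp [dv]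
  have hpos := pathCap_pos hst hc hP
  refine (hγ X hX).2 ⟨fun e => 0 - (-pathCap c P) * ind P e, ⟨fun e he => ?_, fun e he => ?_,
    fun v hs ht => ?_⟩, ?_⟩
  · by_cases h : e ∈ P
    · have := (pathCap_spec c (hP.nonempty hst)).2 e h
      simp [ind, h, hpos.le, this]
    · simp [ind, h, (hc e he).le]
  · have : e ∉ P := fun h => he (hPX h)
    simp [ind, this]
  · have := hlin v
    rw [hP.dv] at this
    simp only [hs.symm, ht.symm, if_false, sub_zero, mul_zero] at this
    rw [dv] at this
    linarith
  · have := hlin s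
    rw [hP.dv] at this
    simp only [if_true, hst.symm, if_false] at this
    rw [dv] at this
    rw [flowValue]
    linarith

lemma wt_le_game [Fintype V] {E : Finset (V × V)} {c : V × V → ℝ} {s t : V}
    {γ : Finset (V × V) → ℝ} (hst : s ≠ t) (hc : ∀ e ∈ E, 0 < c e)
    (hγ : IsFlowGame E c s t γ) (hconv : GameConvex E γ) (X : Finset (V × V)) :
    X ⊆ E → wt E c s t X ≤ γ X := by
  induction X using Finset.strongInduction with
  | _ X ih =>
  intro hX
  by_cases hdeg : ∀ e ∈ X, ∀ e' ∈ X, e.1 = e'.1 → e = e'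
  · by_cases hex : ∃ P, IsSTPath E s t P ∧ P ⊆ X
    · obtain ⟨P, hP, hPX⟩ := hex
      refine le_trans (le_of_eq ?_) (cap_le_game hst hc hγ hX hP hPX)
      unfold wt
      rw [Finset.sum_eq_single P, if_pos hPX]
      · intro Q hQ hne
        refine if_neg fun hQX => hne ?_
        obtain ⟨l, h1, h2, h3, h4, rfl⟩ := isSTPath_iff.1 hP
        obtain ⟨l', h1', h2', h3', h4', rfl⟩ := isSTPath_iff.1 (mem_stPaths.1 hQ)
        rw [path_unique X t hdeg l l' s h1 h1' h2 h2' h3 h3' hPX hQX]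
      · exact fun h => absurd (mem_stPaths.2 hP) h
    · refine le_trans (le_of_eq ?_) (game_nonneg hc hγ hX)
      exact Finset.sum_eq_zero fun P hP => if_neg fun h => hex ⟨P, mem_stPaths.1 hP, h⟩
  · push Not at hdeg
    obtain ⟨e, he, e', he', h1, hne⟩ := hdeg
    have i1 := ih (X.erase e) (Finset.erase_ssubset he) ((Finset.erase_subset _ _).trans hX)
    have i2 := ih (X.erase e') (Finset.erase_ssubset he') ((Finset.erase_subset _ _).trans hX)
    have hS : (X.erase e).erase e' ⊆ E :=
      ((Finset.erase_subset _ _).trans (Finset.erase_subset _ _)).trans hX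
    have i3 := game_le_wt hst hγ hS
    have i4 := hconv e (hX he) ((X.erase e).erase e') (X.erase e) (Finset.erase_subset _ _)
      (Finset.erase_subset_erase _ hX)
    rw [Finset.insert_erase he, Finset.erase_right_comm,
      Finset.insert_erase (Finset.mem_erase.2 ⟨hne, he⟩)] at i4
    rw [Finset.erase_right_comm] at i3
    have i5 : wt E c s t X + wt E c s t ((X.erase e').erase e)
        = wt E c s t (X.erase e) + wt E c s t (X.erase e') := by
      unfold wt
      rw [← Finset.sum_add_distrib, ← Finset.sum_add_distrib]
      refine Finset.sum_congr rfl fun P hP => ?_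
      have hnot : ¬ (e ∈ P ∧ e' ∈ P) := by
        rintro ⟨h, h'⟩
        obtain ⟨l, hn, -, -, -, rfl⟩ := isSTPath_iff.1 (mem_stPaths.1 hP)
        exact hne (arcsOf_tail_inj hn h h' h1)
      simp only [Finset.subset_erase]
      by_cases a : P ⊆ X <;> by_cases b : e ∈ P <;> by_cases d : e' ∈ P <;> simp_all
    linarith

lemma key_unique [Fintype V] {E : Finset (V × V)} {c : V × V → ℝ} {s t : V}
    {γ : Finset (V × V) → ℝ} (hst : s ≠ t) (hc : ∀ e ∈ E, 0 < c e)
    (hγ : IsFlowGame E c s t γ) (hconv : GameConvex E γ) {R Q : Finset (V × V)}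
    (hR : IsSTPath E s t R) (hQ : IsSTPath E s t Q) {b : V × V} (hbR : b ∈ R) (hbQ : b ∈ Q)
    (hb : c b = pathCap c R) : Q = R := by
  by_contra hne
  obtain ⟨L, h0, h1, h2, h3⟩ := game_decomp hst hγ (Finset.Subset.refl E)
  have h4 := (wt_le_game hst hc hγ hconv E (Finset.Subset.refl E)).trans h3
  have h5 := (Finset.sum_eq_sum_iff_of_le h1).1 (le_antisymm (Finset.sum_le_sum h1) h4)
  have hRE := h5 R (mem_stPaths.2 hR)
  have hQE := h5 Q (mem_stPaths.2 hQ)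
  rw [if_pos hR.subset] at hRE
  rw [if_pos hQ.subset] at hQE
  have h6 := h2 b (hR.subset hbR)
  have h7 : ∑ P ∈ {Q, R}, L P * ind P b ≤ ∑ P ∈ stPaths E s t, L P * ind P b := by
    refine Finset.sum_le_sum_of_subset_of_nonneg ?_ fun P _ _ => ?_
    · intro P hP
      rw [Finset.mem_insert, Finset.mem_singleton] at hP
      rcases hP with rfl | rfl
      · exact mem_stPaths.2 hQ
      · exact mem_stPaths.2 hR
    · unfold ind
      split_ifs <;> simp [h0]
  rw [Finset.sum_pair hne] at h7
  simp only [ind, hbR, hbQ, if_true, mul_one] at h7 h6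
  have := pathCap_pos hst hc hQ
  linarith

end aux

/-- Bottleneck-disjoint path cover.  If every arc lies on some `s`-`t`
path and the flow game is convex, then the `s`-`t` paths cover all arcs, no two distinct
`s`-`t` paths share a bottleneck arc, and every `s`-`t` path contains a bottleneck arc
through which it is the unique `s`-`t` path. -/
theorem bottleneck_disjoint_path_cover
    {V : Type*} [Fintype V] [DecidableEq V]
    (E : Finset (V × V)) (c : V × V → ℝ) (s t : V) (γ : Finset (V × V) → ℝ)
    (hst : s ≠ t) (hc : ∀ e ∈ E, 0 < c e)
    (hγ : IsFlowGame E c s t γ)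
    (hcover : ∀ e ∈ E, ∃ P : Finset (V × V), IsSTPath E s t P ∧ e ∈ P)
    (hconv : GameConvex E γ) :
    ((stPaths E s t).biUnion (fun P => P) = E) ∧
    (∀ P Q : Finset (V × V), IsSTPath E s t P → IsSTPath E s t Q → P ≠ Q →
      ∀ b : V × V, IsBottleneck E c s t b → ¬ (b ∈ P ∧ b ∈ Q)) ∧
    (∀ P : Finset (V × V), IsSTPath E s t P →
      ∃ b ∈ P, IsBottleneck E c s t b ∧
        ∀ Q : Finset (V × V), IsSTPath E s t Q → b ∈ Q → Q = P) := by
  refine ⟨?_, ?_, ?_⟩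
  · ext e
    rw [Finset.mem_biUnion]
    constructor
    · rintro ⟨P, hP, he⟩
      exact (mem_stPaths.1 hP).subset he
    · intro he
      obtain ⟨P, hP, h⟩ := hcover e he
      exact ⟨P, mem_stPaths.2 hP, h⟩
  · rintro P Q hP hQ hne b ⟨R, hR, hbR, hb⟩ ⟨hbP, hbQ⟩
    exact hne ((key_unique hst hc hγ hconv hR hP hbR hbP hb).trans
      (key_unique hst hc hγ hconv hR hQ hbR hbQ hb).symm)
  · intro P hP
    obtain ⟨⟨b, hb, h⟩, -⟩ := pathCap_spec c (hP.nonempty hst)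
    exact ⟨b, hb, ⟨P, hP, hb, h⟩, fun Q hQ hbQ => key_unique hst hc hγ hconv hP hQ hb hbQ h⟩
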